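/- For all integers n > n′ ≥ 1, the type 𝒯_{n,n′} has recoverable consensus number exactly n′: there is a recoverable wait-free binary consensus algorithm for n′ processes using objects of type 𝒯_{n,n′} together with registers, and there is no recoverable wait-free binary consensus algorithm for n′+1 processes using objects of type 𝒯_{n,n′} together with registers. -/

import Mathlib

/-!
**Solvability for `n'` processes.** One object of type `𝒯_{n,n'}`, initially `s`, suffices: a process
reads it, applies `op_x` for its input `x` if the value is still `s`, and decides the bit it learns.
The value never returns to `s`, so each process applies at most one update, even if it crashes.
Hence there are at most `n' ≤ n - 1` updates, the value never passes `s_{x,n'}`, and `op_R` always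
reveals the first update `x` (`InvM`, `algo_solves`).

**Impossibility for `n' + 1` processes.** This is a valency argument over executions with a crash
budget: a fixed process `p₀` never crashes, each of its steps allows `B` further crashes, and each
crash of another process uses up one (`BTrans`). In an infinite such execution some process takes
infinitely many steps and crashes only finitely often, hence decides; so there is a critical
configuration (`exists_critical`), in which every process belongs to the team given by the valence
of its next step, and both teams are nonempty.

If steps of opposite teams commute on the memory, or one makes the other unnoticeable, some process
(possibly after a crash paid for by a step of `p₀`) cannot tell two configurations of opposite
valence apart (`no_commute`, `no_overwrite`). Therefore all processes are poised at one object `O`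
with pairwise non-absorbing operations of opposite teams (`same_object`). Registers are excluded,
and for `𝒯_{n,n'}` the value is `s` and all pending operations are updates. Let all `n' + 1` processes
take their step, with `p₀` or with some `q` of the other team going first, and crash `q`. The value
of `O` is now `s_{x,n'+1}`, with `x` depending on the first process, or already `s_⊥`. Process `q`,
running alone, can learn `x` only by an update; it is crashed after each update until it reads `O`,
the value becomes `s_⊥`, or it decides without learning `x`. In all cases it decides the same value
in both executions, which is a contradiction (`Hid`, `hid_contra`, `impossible`).
-/

namespace RecoverableConsensus

/-- A deterministic object type: a set of values, operations and responses together with a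
transition function assigning to each (value, operation) pair a unique response and a unique
resulting value. -/
structure DetType : Type 1 where
  Value : Type
  Op : Type
  Resp : Type
  δ : Value → Op → Resp × Value

/-- A type is readable if it has a Read operation that returns (an injective encoding of)
the current value of the object without changing it. -/
def Readable (T : DetType) : Prop :=
  ∃ (read : T.Op) (ι : T.Value → T.Resp),
    Function.Injective ι ∧ ∀ v, T.δ v read = (ι v, v)

/-- The register type over the value set `V`: the operation `none` is Read (returning the
current value without changing it) and `some v` is Write(v) (changing the value to `v`). -/
def RegisterType (V : Type) : DetType where
  Value := V
  Op := Option V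
  Resp := V
  δ := fun u op =>
    match op with
    | none => (u, u)
    | some v => (v, v)

def IsRegister (T : DetType) : Prop := ∃ V : Type, T = RegisterType V

/-- An event is either a step by a process or a crash of a process. -/
inductive Event (n : ℕ) : Type where
  | step : Fin n → Event n
  | crash : Fin n → Event n
deriving DecidableEq

/-- An algorithm for `n` processes: a collection of shared objects, each with a deterministic
type and an initial value, and for each process a deterministic state machine with an initial
state depending on the process's binary input.  Each state determines the process's next step
(`pending`: an operation applied to a designated object, or `none` for a no-op); the state
reached after a step is determined by the current state and the response received (`next`).
`output i s = some v` means that `s` is an output state of process `i` for the value `v`;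
processes in output states take only no-op steps. -/
structure Algorithm (n : ℕ) : Type 1 where
  ObjIdx : Type
  objType : ObjIdx → DetType
  objInit : (o : ObjIdx) → (objType o).Value
  PState : Fin n → Type
  init : (i : Fin n) → Bool → PState i
  pending : (i : Fin n) → PState i → Option ((o : ObjIdx) × (objType o).Op)
  next : (i : Fin n) → PState i → (o : ObjIdx) → (objType o).Resp → PState i
  output : (i : Fin n) → PState i → Option Bool
  output_noop : ∀ i s, output i s ≠ none → pending i s = none

/-- A configuration assigns a state to each process and a value to each object. -/
structure Config {n : ℕ} (A : Algorithm n) : Type where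
  pstate : (i : Fin n) → A.PState i
  oval : (o : A.ObjIdx) → (A.objType o).Value

variable {n : ℕ}

/-- The effect of one event on a configuration.  A crash of `p_i` resets `p_i` to its initial
state (for its input) and leaves all object values unchanged; a step of `p_i` applies its
pending operation (if any) to the designated object, receiving the response determined by the
type's transition function. -/
noncomputable def applyEvent (A : Algorithm n) (input : Fin n → Bool) (C : Config A) :
    Event n → Config A
  | .crash i => { C with pstate := Function.update C.pstate i (A.init i (input i)) }
  | .step i =>
    letI : DecidableEq A.ObjIdx := Classical.decEq _
    match A.pending i (C.pstate i) with
    | none => C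
    | some ⟨o, op⟩ =>
      { pstate := Function.update C.pstate i
          (A.next i (C.pstate i) o ((A.objType o).δ (C.oval o) op).1),
        oval := Function.update C.oval o ((A.objType o).δ (C.oval o) op).2 }

/-- Since the algorithm is deterministic, a finite execution from `C` is determined by its
schedule, i.e. its list of events; `run A input C σ` is the configuration `Cσ` reached by
applying the events of `σ` in order from `C`. -/
noncomputable def run (A : Algorithm n) (input : Fin n → Bool) (C : Config A) :
    List (Event n) → Config A
  | [] => C
  | e :: σ => run A input (applyEvent A input C e) σ

/-- The initial configuration: every process in its initial state, every object at its
initial value. -/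
def initConfig (A : Algorithm n) (input : Fin n → Bool) : Config A :=
  ⟨fun i => A.init i (input i), A.objInit⟩

/-- Process `i` has decided `v` in `Cσ`: at some point along the execution `σ` from `C`,
process `i` was in an output state for `v`. -/
def HasDecided (A : Algorithm n) (input : Fin n → Bool) (C : Config A)
    (σ : List (Event n)) (i : Fin n) (v : Bool) : Prop :=
  ∃ τ, τ <+: σ ∧ A.output i ((run A input C τ).pstate i) = some v

def CrashFree (σ : List (Event n)) : Prop := ∀ i : Fin n, Event.crash i ∉ σ

/-- The first `k` events of an infinite execution. -/
def initSeg (e : ℕ → Event n) (k : ℕ) : List (Event n) := (List.range k).map e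

/-- Agreement: in every execution no two processes decide different values. -/
def Agreement (A : Algorithm n) : Prop :=
  ∀ (input : Fin n → Bool) (σ : List (Event n)) (i j : Fin n) (v w : Bool),
    HasDecided A input (initConfig A input) σ i v →
    HasDecided A input (initConfig A input) σ j w → v = w

/-- Validity: every decided value is the input of some process. -/
def Validity (A : Algorithm n) : Prop :=
  ∀ (input : Fin n → Bool) (σ : List (Event n)) (i : Fin n) (v : Bool),
    HasDecided A input (initConfig A input) σ i v → ∃ j, input j = v

/-- Recoverable wait-freedom: every process, starting from its initial state, either crashes
or decides within a finite number of its own steps.  Equivalently: in every infinite execution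
in which process `i` starts at (or is reset by a crash to) its initial state, takes infinitely
many steps and crashes only finitely often, it eventually reaches an output state. -/
def RecWaitFree (A : Algorithm n) : Prop :=
  ∀ (input : Fin n → Bool) (C : Config A) (e : ℕ → Event n) (i : Fin n),
    (C.pstate i = A.init i (input i) ∨ ∃ k, e k = Event.crash i) →
    (∀ m, ∃ k, m ≤ k ∧ e k = Event.step i) →
    (∃ m, ∀ k, m ≤ k → e k ≠ Event.crash i) →
    ∃ (k : ℕ) (v : Bool), A.output i ((run A input C (initSeg e k)).pstate i) = some v

/-- A recoverable wait-free binary consensus algorithm. -/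
def SolvesRecConsensus (A : Algorithm n) : Prop :=
  Agreement A ∧ Validity A ∧ RecWaitFree A

/-- Agreement restricted to crash-free executions. -/
def AgreementCF (A : Algorithm n) : Prop :=
  ∀ (input : Fin n → Bool) (σ : List (Event n)), CrashFree σ →
    ∀ (i j : Fin n) (v w : Bool),
      HasDecided A input (initConfig A input) σ i v →
      HasDecided A input (initConfig A input) σ j w → v = w

/-- Validity restricted to crash-free executions. -/
def ValidityCF (A : Algorithm n) : Prop :=
  ∀ (input : Fin n → Bool) (σ : List (Event n)), CrashFree σ →
    ∀ (i : Fin n) (v : Bool),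
      HasDecided A input (initConfig A input) σ i v → ∃ j, input j = v

/-- Wait-freedom: in crash-free executions, every process that takes infinitely many steps
decides. -/
def WaitFree (A : Algorithm n) : Prop :=
  ∀ (input : Fin n → Bool) (e : ℕ → Event n),
    (∀ (k : ℕ) (i : Fin n), e k ≠ Event.crash i) →
    ∀ i : Fin n, (∀ m, ∃ k, m ≤ k ∧ e k = Event.step i) →
    ∃ (k : ℕ) (v : Bool),
      A.output i ((run A input (initConfig A input) (initSeg e k)).pstate i) = some v

/-- A wait-free binary consensus algorithm (for the model in which crashes are permanent,
i.e. only crash-free executions are relevant). -/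
def SolvesWFConsensus (A : Algorithm n) : Prop :=
  AgreementCF A ∧ ValidityCF A ∧ WaitFree A

/-- The number of crashes of process `i` in `σ`. -/
def crashCount (i : Fin n) (σ : List (Event n)) : ℕ :=
  (σ.filter fun e => decide (e = Event.crash i)).length

def isStepBelow (i : Fin n) : Event n → Bool
  | .step j => decide (j < i)
  | .crash _ => false

/-- The total number of steps taken by processes `p_0, …, p_{i-1}` in `σ`. -/
def stepsBelow (i : Fin n) (σ : List (Event n)) : ℕ := (σ.filter (isStepBelow i)).length

/-- The crash bound: for every process `p_i`, the number of crashes of `p_i` is at most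
`z·n` times the total number of steps of `p_0, …, p_{i-1}` (for `i = 0` this says that `p_0`
never crashes). -/
def EMem (z : ℕ) (σ : List (Event n)) : Prop :=
  ∀ i : Fin n, crashCount i σ ≤ z * n * stepsBelow i σ

/-- `𝓔_z`: executions satisfying the crash bound. -/
def ESet (n z : ℕ) : Set (List (Event n)) := { σ | EMem z σ }

/-- `𝓔*_z`: executions satisfying the crash bound in every prefix. -/
def EStarSet (n z : ℕ) : Set (List (Event n)) := { σ | ∀ τ, τ <+: σ → EMem z τ }

/-- `e` is an event by a process in `P`. -/
def eventBy (P : Set (Fin n)) : Event n → Prop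
  | .step i => i ∈ P
  | .crash i => i ∈ P

/-- The set of processes `P` is `v`-univalent in the execution `α` from `C` with respect to
the set of executions `𝒜`. -/
def VUnivalentIn (A : Algorithm n) (input : Fin n → Bool) (C : Config A)
    (𝒜 : Set (List (Event n))) (P : Set (Fin n)) (α : List (Event n)) (v : Bool) : Prop :=
  α ∈ 𝒜 ∧ ∀ β : List (Event n), (∀ e ∈ β, eventBy P e) → (α ++ β) ∈ 𝒜 →
    ∀ (i : Fin n) (w : Bool), HasDecided A input C (α ++ β) i w → w = v

/-- The set of processes `P` is bivalent in the execution `α` from `C` with respect to `𝒜`. -/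
def BivalentIn (A : Algorithm n) (input : Fin n → Bool) (C : Config A)
    (𝒜 : Set (List (Event n))) (P : Set (Fin n)) (α : List (Event n)) : Prop :=
  ∀ v : Bool, ∃ β : List (Event n), (∀ e ∈ β, eventBy P e) ∧ (α ++ β) ∈ 𝒜 ∧
    ∃ i : Fin n, HasDecided A input C (α ++ β) i v

/-- `P` is univalent in `α` with respect to `𝒜`: `v`-univalent for some `v`. -/
def UnivalentIn (A : Algorithm n) (input : Fin n → Bool) (C : Config A)
    (𝒜 : Set (List (Event n))) (P : Set (Fin n)) (α : List (Event n)) : Prop :=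
  ∃ v : Bool, VUnivalentIn A input C 𝒜 P α v

/-- `α ∈ 𝒜` is critical with respect to `𝒜`: `α` is bivalent with respect to `𝒜` and every
nonempty extension of `α` inside `𝒜` is univalent with respect to `𝒜`. -/
def Critical (A : Algorithm n) (input : Fin n → Bool) (C : Config A)
    (𝒜 : Set (List (Event n))) (α : List (Event n)) : Prop :=
  α ∈ 𝒜 ∧ BivalentIn A input C 𝒜 Set.univ α ∧
  ∀ β : List (Event n), β ≠ [] → (α ++ β) ∈ 𝒜 → UnivalentIn A input C 𝒜 Set.univ (α ++ β)

/-- Process `i` is on team `v` in `Cα` (with respect to `𝒜`): `α p_i` is `v`-univalent. -/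
def OnTeam (A : Algorithm n) (input : Fin n → Bool) (C : Config A)
    (𝒜 : Set (List (Event n))) (α : List (Event n)) (i : Fin n) (v : Bool) : Prop :=
  VUnivalentIn A input C 𝒜 Set.univ (α ++ [Event.step i]) v

/-- Process `i` is poised to apply an operation to object `O` in configuration `C`. -/
def PoisedAt (A : Algorithm n) (C : Config A) (i : Fin n) (O : A.ObjIdx) : Prop :=
  ∃ op, A.pending i (C.pstate i) = some ⟨O, op⟩

/-- `σ ∈ 𝒮(P)`: a crash-free schedule in which each process of `P` takes at most one step
and no other process takes a step. -/
def IsSched (P : Set (Fin n)) (σ : List (Event n)) : Prop :=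
  ∃ l : List (Fin n), l.Nodup ∧ (∀ j ∈ l, j ∈ P) ∧ σ = l.map Event.step

/-- The schedule `λ_k = c_k c_{k+1} ⋯ c_{n-1}`. -/
def lambdaSched (n k : ℕ) : List (Event n) :=
  ((List.finRange n).filter fun j => decide (k ≤ j.val)).map Event.crash

/-- `U_v`: the set of values of object `O` reachable from `Dα` by a schedule in `𝒮(𝒫)`
whose first process is on team `v`. -/
def USetCfg (A : Algorithm n) (input : Fin n → Bool) (D : Config A)
    (𝒜 : Set (List (Event n))) (α : List (Event n)) (O : A.ObjIdx) (v : Bool) :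
    Set (A.objType O).Value :=
  { w | ∃ (j : Fin n) (σ : List (Event n)), OnTeam A input D 𝒜 α j v ∧
        IsSched {k : Fin n | k ≠ j} σ ∧
        w = (run A input D (α ++ Event.step j :: σ)).oval O }

/-- The configuration `Dα` is `v`-hiding. -/
def VHiding (A : Algorithm n) (input : Fin n → Bool) (D : Config A)
    (𝒜 : Set (List (Event n))) (α : List (Event n)) (O : A.ObjIdx) (v : Bool) : Prop :=
  USetCfg A input D 𝒜 α O false ∩ USetCfg A input D 𝒜 α O true = ∅ ∧
  (run A input D α).oval O ∈ USetCfg A input D 𝒜 α O v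

/-- The configuration `Dα` is `n`-recording. -/
def NRecordingCfg (A : Algorithm n) (input : Fin n → Bool) (D : Config A)
    (𝒜 : Set (List (Event n))) (α : List (Event n)) (O : A.ObjIdx) : Prop :=
  USetCfg A input D 𝒜 α O false ∩ USetCfg A input D 𝒜 α O true = ∅ ∧
  ∀ v : Bool, (run A input D α).oval O ∈ USetCfg A input D 𝒜 α O v →
    ∃! j : Fin n, OnTeam A input D 𝒜 α j (!v)

/-- Apply the operations `o i` of the processes listed in `σ`, in order, to an object of type
`T`, starting from the value `u`. -/
def applyOps (T : DetType) (o : Fin n → T.Op) : T.Value → List (Fin n) → T.Value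
  | u, [] => u
  | u, i :: σ => applyOps T o (T.δ u (o i)).2 σ

/-- `U_x`: the set of values obtainable by applying the operations of the processes of a
duplicate-free schedule whose first process is on team `x` to an object with initial value
`u`. -/
def UVals (T : DetType) (o : Fin n → T.Op) (u : T.Value) (team : Fin n → Bool) (x : Bool) :
    Set T.Value :=
  { v | ∃ (i : Fin n) (σ : List (Fin n)), team i = x ∧ (i :: σ).Nodup ∧
        v = applyOps T o u (i :: σ) }

/-- A deterministic type `T` is `n`-recording. -/
def NRecording (n : ℕ) (T : DetType) : Prop :=
  ∃ (u : T.Value) (team : Fin n → Bool) (o : Fin n → T.Op),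
    (∀ x : Bool, ∃ i, team i = x) ∧
    (UVals T o u team false ∩ UVals T o u team true = ∅) ∧
    (∀ x : Bool, u ∈ UVals T o u team x → ∃! i, team i = !x)

end RecoverableConsensus

namespace RecoverableConsensus

/-- The values of the type `𝒯_{n,n'}`: `s`, `s_⊥`, and `s_{x,i}` for `x ∈ {0,1}` and
`i ∈ {1, …, n-1}` (here `mid x i` with `i : Fin (n-1)` represents `s_{x, i+1}`). -/
inductive TVal (n : ℕ) : Type where
  | s : TVal n
  | bot : TVal n
  | mid : Bool → Fin (n - 1) → TVal n
deriving DecidableEq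

/-- The operations of `𝒯_{n,n'}`. -/
inductive TOp : Type where
  | op0 | op1 | opR
deriving DecidableEq

/-- The responses of `𝒯_{n,n'}`: a bit, a value, or `⊥`. -/
inductive TResp (n : ℕ) : Type where
  | bit : Bool → TResp n
  | val : TVal n → TResp n
  | botR : TResp n
deriving DecidableEq

/-- The deterministic (non-readable) type `𝒯_{n,n'}` for `n > n' ≥ 1`. -/
def TType (n n' : ℕ) (hn : 2 ≤ n) : DetType where
  Value := TVal n
  Op := TOp
  Resp := TResp n
  δ := fun v op =>
    match v, op with
    | .s, .op0 => (.bit false, .mid false ⟨0, by omega⟩)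
    | .s, .op1 => (.bit true, .mid true ⟨0, by omega⟩)
    | .s, .opR => (.val .s, .s)
    | .bot, _ => (.botR, .bot)
    | .mid x i, .op0 =>
        if h : i.val + 1 < n - 1 then (.bit x, .mid x ⟨i.val + 1, h⟩) else (.bit x, .bot)
    | .mid x i, .op1 =>
        if h : i.val + 1 < n - 1 then (.bit x, .mid x ⟨i.val + 1, h⟩) else (.bit x, .bot)
    | .mid x i, .opR =>
        if i.val + 1 ≤ n' then (.val (.mid x i), .mid x i) else (.botR, .bot)

/-- The algorithm uses only objects of type `T` together with registers. -/
def UsesTypeAndRegisters {n : ℕ} (A : Algorithm n) (T : DetType) : Prop :=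
  ∀ o : A.ObjIdx, A.objType o = T ∨ IsRegister (A.objType o)

end RecoverableConsensus

namespace RecoverableConsensus

/-! ### Executions of an arbitrary algorithm -/

section General

variable {N : ℕ} {A : Algorithm N} {input : Fin N → Bool}

lemma run_append (C : Config A) (σ τ : List (Event N)) :
    run A input C (σ ++ τ) = run A input (run A input C σ) τ := by
  induction σ generalizing C with
  | nil => rfl
  | cons e σ ih => exact ih _

lemma run_snoc (C : Config A) (σ : List (Event N)) (e : Event N) :
    run A input C (σ ++ [e]) = applyEvent A input (run A input C σ) e := by
  rw [run_append]; rfl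

lemma step_none {C : Config A} {i : Fin N} (h : A.pending i (C.pstate i) = none) :
    applyEvent A input C (.step i) = C := by
  simp [applyEvent, h]

lemma step_some {C : Config A} {i : Fin N} {o : A.ObjIdx} {a : (A.objType o).Op}
    (h : A.pending i (C.pstate i) = some ⟨o, a⟩) :
    applyEvent A input C (.step i) =
      letI : DecidableEq A.ObjIdx := Classical.decEq _
      { pstate := Function.update C.pstate i
          (A.next i (C.pstate i) o ((A.objType o).δ (C.oval o) a).1),
        oval := Function.update C.oval o ((A.objType o).δ (C.oval o) a).2 } := by
  simp [applyEvent, h]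

lemma step_pstate_ne {C : Config A} {i j : Fin N} (h : j ≠ i) :
    (applyEvent A input C (.step i)).pstate j = C.pstate j := by
  rcases hp : A.pending i (C.pstate i) with _ | ⟨o, a⟩
  · rw [step_none hp]
  · rw [step_some hp]; simp [h]

lemma step_pstate_self {C : Config A} {i : Fin N} {o : A.ObjIdx} {a : (A.objType o).Op}
    (h : A.pending i (C.pstate i) = some ⟨o, a⟩) :
    (applyEvent A input C (.step i)).pstate i =
      A.next i (C.pstate i) o ((A.objType o).δ (C.oval o) a).1 := by
  rw [step_some h]; simp

lemma step_oval_self {C : Config A} {i : Fin N} {o : A.ObjIdx} {a : (A.objType o).Op}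
    (h : A.pending i (C.pstate i) = some ⟨o, a⟩) :
    (applyEvent A input C (.step i)).oval o = ((A.objType o).δ (C.oval o) a).2 := by
  rw [step_some h]; simp

lemma step_oval_ne {C : Config A} {i : Fin N} {o o' : A.ObjIdx} {a : (A.objType o).Op}
    (h : A.pending i (C.pstate i) = some ⟨o, a⟩) (ho : o' ≠ o) :
    (applyEvent A input C (.step i)).oval o' = C.oval o' := by
  rw [step_some h]; simp [ho]

lemma crash_pstate_self (C : Config A) (i : Fin N) :
    (applyEvent A input C (.crash i)).pstate i = A.init i (input i) := by
  simp [applyEvent]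

lemma crash_pstate_ne (C : Config A) {i j : Fin N} (h : j ≠ i) :
    (applyEvent A input C (.crash i)).pstate j = C.pstate j := by
  simp [applyEvent, h]

lemma crash_oval (C : Config A) (i : Fin N) :
    (applyEvent A input C (.crash i)).oval = C.oval := rfl

/-- A step of `r` depends only on the memory and on the state of `r`; the inputs are irrelevant. -/
lemma step_congr {input' : Fin N → Bool} {C D : Config A} {r : Fin N}
    (hp : C.pstate r = D.pstate r) (ho : C.oval = D.oval) :
    (applyEvent A input C (.step r)).pstate r = (applyEvent A input' D (.step r)).pstate r ∧
    (applyEvent A input C (.step r)).oval = (applyEvent A input' D (.step r)).oval := by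
  rcases h : A.pending r (C.pstate r) with _ | ⟨o, a⟩
  · rw [step_none h, step_none (by rw [← hp]; exact h)]; exact ⟨hp, ho⟩
  · rw [step_some h, step_some (by rw [← hp]; exact h)]; simp [hp, ho]

lemma solo_congr {input' : Fin N → Bool} {r : Fin N} (m : ℕ) {C D : Config A}
    (hp : C.pstate r = D.pstate r) (ho : C.oval = D.oval) :
    (run A input C (List.replicate m (.step r))).pstate r =
      (run A input' D (List.replicate m (.step r))).pstate r := by
  induction m generalizing C D with
  | zero => exact hp
  | succ m ih =>
    have h := step_congr (input := input) (input' := input') hp ho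
    exact ih h.1 h.2

/-- `C` occurs in some execution (with arbitrary crashes) from the initial configuration. -/
def Occurs (A : Algorithm N) (input : Fin N → Bool) (C : Config A) : Prop :=
  ∃ σ, C = run A input (initConfig A input) σ

lemma Occurs.event {C : Config A} (h : Occurs A input C) (e : Event N) :
    Occurs A input (applyEvent A input C e) := by
  obtain ⟨σ, rfl⟩ := h
  exact ⟨σ ++ [e], (run_snoc _ _ _).symm⟩

lemma Occurs.run {C : Config A} (h : Occurs A input C) (σ : List (Event N)) :
    Occurs A input (run A input C σ) := by
  obtain ⟨τ, rfl⟩ := h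
  exact ⟨τ ++ σ, (run_append _ _ _).symm⟩

lemma Occurs.agree (hA : Agreement A) {C : Config A} (h : Occurs A input C) {i j : Fin N}
    {v w : Bool} {σ : List (Event N)} (hi : A.output i (C.pstate i) = some v)
    (hj : A.output j ((RecoverableConsensus.run A input C σ).pstate j) = some w) : v = w := by
  obtain ⟨τ, rfl⟩ := h
  refine hA input (τ ++ σ) i j v w ⟨τ, List.prefix_append _ _, hi⟩ ⟨τ ++ σ, List.prefix_rfl, ?_⟩
  rw [run_append]; exact hj

/-- Output states are stable until the next crash. -/
lemma output_stable {i : Fin N} {v : Bool} {σ : List (Event N)} (hσ : Event.crash i ∉ σ)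
    {C : Config A} (h : A.output i (C.pstate i) = some v) :
    A.output i ((run A input C σ).pstate i) = some v := by
  induction σ generalizing C with
  | nil => exact h
  | cons e σ ih =>
    refine ih (by simp at hσ; tauto) ?_
    cases e with
    | step j =>
      by_cases hj : i = j
      · subst hj
        rw [step_none (A.output_noop i _ (by simp [h]))]; exact h
      · rw [step_pstate_ne hj]; exact h
    | crash j =>
      have hj : i ≠ j := by rintro rfl; simp at hσ
      rw [crash_pstate_ne _ hj]; exact h

lemma initSeg_append (ρ : List (Event N)) (f : Event N) (k : ℕ) :
    ∃ m, initSeg (fun k => ρ.getD k f) k = ρ.take k ++ List.replicate m f ∧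
      (ρ.length ≤ k ∨ m = 0) := by
  refine ⟨k - ρ.length, ?_, by omega⟩
  apply List.ext_getElem
  · simp [initSeg]; omega
  · intro i h1 h2
    simp [initSeg] at h1
    by_cases hi : i < ρ.length
    · have : i < (ρ.take k).length := by simp; omega
      rw [List.getElem_append_left this]
      simp [initSeg, hi]
    · have : (ρ.take k).length ≤ i := by simp; omega
      rw [List.getElem_append_right this]
      simp [initSeg, List.getElem?_eq_none (by omega : ρ.length ≤ i)]

/-- The suffix of an execution after the last crash of `i`. -/
lemma Occurs.lastCrash {C : Config A} (h : Occurs A input C) (i : Fin N) :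
    ∃ D ρ, D.pstate i = A.init i (input i) ∧ Event.crash i ∉ ρ ∧
      C = RecoverableConsensus.run A input D ρ := by
  obtain ⟨σ, rfl⟩ := h
  induction σ using List.reverseRecOn with
  | nil => exact ⟨initConfig A input, [], rfl, by simp, rfl⟩
  | append_singleton σ e ih =>
    obtain ⟨D, ρ, h1, h2, h3⟩ := ih
    by_cases he : e = Event.crash i
    · subst he
      exact ⟨_, [], by rw [run_snoc]; exact crash_pstate_self _ _, by simp, rfl⟩
    · refine ⟨D, ρ ++ [e], h1, ?_, by rw [run_snoc, run_snoc, h3]⟩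
      simp only [List.mem_append, List.mem_singleton, not_or]
      exact ⟨h2, fun h => he h.symm⟩

/-- Every process decides when run alone from a configuration that occurs. -/
lemma Occurs.solo (hW : RecWaitFree A) {C : Config A} (h : Occurs A input C) (i : Fin N) :
    ∃ m v, A.output i
      ((RecoverableConsensus.run A input C (List.replicate m (.step i))).pstate i) = some v := by
  obtain ⟨D, ρ, h1, h2, rfl⟩ := h.lastCrash i
  obtain ⟨k, v, hk⟩ := hW input D (fun k => ρ.getD k (.step i)) i (Or.inl h1)
    (fun m => ⟨m + ρ.length, by omega, by simp⟩)
    ⟨ρ.length, fun k hk => by simp [List.getElem?_eq_none hk]⟩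
  obtain ⟨m, hm, hkm⟩ := initSeg_append ρ (.step i) k
  rw [hm] at hk
  refine ⟨m, v, ?_⟩
  rcases hkm with hkm | rfl
  · rw [List.take_of_length_le hkm, run_append] at hk
    exact hk
  · simp only [List.replicate_zero, List.append_nil] at hk ⊢
    have := output_stable (input := input) (σ := ρ.drop k)
      (fun h => h2 (List.mem_of_mem_drop h)) hk
    rw [← run_append, List.take_append_drop] at this
    exact this

end General

/-! ### Budgeted executions and valence -/

section Budget

variable {N : ℕ}

/-- Budget bookkeeping for crashes: `BTrans p₀ B b e b'` says that the event `e` is allowed with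
crash budget `b` and leaves budget `b'`.  The process `p₀` never crashes, each of its steps adds
`B` to the budget, and every crash of another process costs `1`. -/
inductive BTrans (p₀ : Fin N) (B : ℕ) : ℕ → Event N → ℕ → Prop
  | main (b) : BTrans p₀ B b (.step p₀) (b + B)
  | step (b) {i : Fin N} (h : i ≠ p₀) : BTrans p₀ B b (.step i) b
  | crash (b) {i : Fin N} (h : i ≠ p₀) : BTrans p₀ B (b + 1) (.crash i) b

/-- Schedules all of whose events are allowed by the crash budget. -/
inductive BSched (p₀ : Fin N) (B : ℕ) : ℕ → List (Event N) → ℕ → Prop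
  | nil (b) : BSched p₀ B b [] b
  | cons {b e b' σ b''} (h : BTrans p₀ B b e b') (hσ : BSched p₀ B b' σ b'') :
      BSched p₀ B b (e :: σ) b''

variable {A : Algorithm N} {input : Fin N → Bool} {p₀ : Fin N} {B : ℕ}

/-- Some budgeted execution from `C` with budget `b` leads to a decision for `v`. -/
def CanDecide (A : Algorithm N) (input : Fin N → Bool) (p₀ : Fin N) (B : ℕ) (C : Config A)
    (b : ℕ) (v : Bool) : Prop :=
  ∃ σ b', BSched p₀ B b σ b' ∧ ∃ i, A.output i ((run A input C σ).pstate i) = some v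

/-- Bivalence with respect to budgeted executions. -/
def Biv (A : Algorithm N) (input : Fin N → Bool) (p₀ : Fin N) (B : ℕ) (C : Config A)
    (b : ℕ) : Prop := ∀ v, CanDecide A input p₀ B C b v

/-- No budgeted execution decides a value other than `v`. -/
def Uni (A : Algorithm N) (input : Fin N → Bool) (p₀ : Fin N) (B : ℕ) (C : Config A)
    (b : ℕ) (v : Bool) : Prop := ¬ CanDecide A input p₀ B C b (!v)

lemma Uni.event {C : Config A} {b b' : ℕ} {v : Bool} {e : Event N}
    (h : Uni A input p₀ B C b v) (he : BTrans p₀ B b e b') :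
    Uni A input p₀ B (applyEvent A input C e) b' v := by
  rintro ⟨σ, c, hσ, hd⟩
  exact h ⟨e :: σ, c, .cons he hσ, hd⟩

lemma exists_stepTrans (p₀ : Fin N) (B b : ℕ) (i : Fin N) :
    ∃ b', b ≤ b' ∧ BTrans p₀ B b (.step i) b' := by
  by_cases h : i = p₀
  · subst h; exact ⟨_, Nat.le_add_right _ _, .main b⟩
  · exact ⟨b, le_rfl, .step b h⟩

lemma exists_stepsSched (p₀ : Fin N) (B : ℕ) (l : List (Fin N)) (b : ℕ) :
    ∃ b', b ≤ b' ∧ BSched p₀ B b (l.map .step) b' := by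
  induction l generalizing b with
  | nil => exact ⟨b, le_rfl, .nil b⟩
  | cons i l ih =>
    obtain ⟨b1, h1, t1⟩ := exists_stepTrans p₀ B b i
    obtain ⟨b2, h2, t2⟩ := ih b1
    exact ⟨b2, h1.trans h2, .cons t1 t2⟩

lemma Uni.sched {σ : List (Event N)} {C : Config A} {b b' : ℕ} {v : Bool}
    (h : Uni A input p₀ B C b v) (hσ : BSched p₀ B b σ b') :
    Uni A input p₀ B (run A input C σ) b' v := by
  induction hσ generalizing C with
  | nil b => exact h
  | cons he _ ih => exact ih (h.event he)

lemma Uni.decided {C : Config A} {b : ℕ} {v w : Bool} {i : Fin N}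
    (h : Uni A input p₀ B C b v) (hi : A.output i (C.pstate i) = some w) : w = v := by
  by_contra hne
  have : w = !v := by cases v <;> cases w <;> simp_all
  subst this
  exact h ⟨[], b, .nil b, i, hi⟩

lemma exists_soloSched (p₀ : Fin N) (B : ℕ) (m : ℕ) (i : Fin N) (b : ℕ) :
    ∃ b', BSched p₀ B b (List.replicate m (.step i)) b' := by
  obtain ⟨b', _, h⟩ := exists_stepsSched p₀ B (List.replicate m i) b
  exact ⟨b', by simpa using h⟩

/-- Configurations of opposite valence are distinguishable by every process: a process that sees
the same memory and is in the same state decides the same value when run alone. -/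
lemma Uni.indist (hW : RecWaitFree A) {D₁ D₂ : Config A} {b₁ b₂ : ℕ} {v w : Bool} (hvw : v ≠ w)
    (h₁ : Uni A input p₀ B D₁ b₁ v) (h₂ : Uni A input p₀ B D₂ b₂ w)
    (hr : Occurs A input D₁) (r : Fin N) (hp : D₁.pstate r = D₂.pstate r)
    (ho : D₁.oval = D₂.oval) : False := by
  obtain ⟨m, x, hx⟩ := hr.solo hW r
  obtain ⟨_, s₁⟩ := exists_soloSched p₀ B m r b₁
  obtain ⟨_, s₂⟩ := exists_soloSched p₀ B m r b₂
  have e₁ := (h₁.sched s₁).decided hx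
  rw [solo_congr (input := input) (input' := input) m hp ho] at hx
  exact hvw (e₁.symm.trans ((h₂.sched s₂).decided hx))

lemma Biv.undecided (hA : Agreement A) {C : Config A} {b : ℕ} (h : Biv A input p₀ B C b)
    (hr : Occurs A input C) {i : Fin N} {v : Bool} : A.output i (C.pstate i) ≠ some v := by
  intro hi
  obtain ⟨σ, _, _, j, hj⟩ := h (!v)
  exact absurd (hr.agree hA hi hj) (by simp)

lemma exists_uni_of_not_biv {C : Config A} {b : ℕ} (h : ¬ Biv A input p₀ B C b) :
    ∃ v, Uni A input p₀ B C b v := by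
  obtain ⟨v, hv⟩ := not_forall.1 h
  exact ⟨!v, by simpa [Uni] using hv⟩

/-- A bivalent initial configuration. -/
lemma exists_initial_biv (hV : Validity A) (hW : RecWaitFree A) {p₁ : Fin N} (h : p₁ ≠ p₀) :
    ∃ input, Biv A input p₀ B (initConfig A input) 0 := by
  refine ⟨fun i => decide (i ≠ p₀), fun v => ?_⟩
  obtain ⟨r, hr⟩ : ∃ r : Fin N, decide (r ≠ p₀) = v := by
    cases v
    · exact ⟨p₀, by simp⟩
    · exact ⟨p₁, by simpa using h⟩
  obtain ⟨m, x, hx⟩ := Occurs.solo hW (⟨[], rfl⟩ :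
    Occurs A (fun i => decide (i ≠ p₀)) (initConfig A (fun i => decide (i ≠ p₀)))) r
  obtain ⟨b', hs⟩ := exists_soloSched p₀ B m r 0
  -- The solo run of `r` is also an execution in which all inputs equal that of `r`.
  have hx' : A.output r ((run A (fun _ => v) (initConfig A (fun _ => v))
      (List.replicate m (.step r))).pstate r) = some x := by
    rw [← hx]
    congr 1
    exact solo_congr m (congrArg (A.init r) hr.symm) rfl
  obtain ⟨_, hj⟩ := hV _ _ r x ⟨_, List.prefix_rfl, hx'⟩
  exact ⟨_, b', hs, r, hj ▸ hx⟩

/-- A bivalent configuration that occurs, from which no single allowed event leads to a bivalent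
configuration. -/
lemma exists_critical (hA : Agreement A) (hW : RecWaitFree A)
    (h0 : Biv A input p₀ B (initConfig A input) 0) :
    ∃ C b, Occurs A input C ∧ Biv A input p₀ B C b ∧
      ∀ e b', BTrans p₀ B b e b' → ¬ Biv A input p₀ B (applyEvent A input C e) b' := by
  by_contra hcon
  have hstep : ∀ S : {S : Config A × ℕ // Occurs A input S.1 ∧ Biv A input p₀ B S.1 S.2},
      ∃ (e : Event N) (b' : ℕ), BTrans p₀ B S.1.2 e b' ∧
        Biv A input p₀ B (applyEvent A input S.1.1 e) b' := by
    rintro ⟨⟨C, b⟩, hC, hb⟩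
    by_contra hno
    exact hcon ⟨C, b, hC, hb, fun e b' he hb' => hno ⟨e, b', he, hb'⟩⟩
  choose ev bud htr hbiv using hstep
  let nxt : {S : Config A × ℕ // Occurs A input S.1 ∧ Biv A input p₀ B S.1 S.2} →
      {S : Config A × ℕ // Occurs A input S.1 ∧ Biv A input p₀ B S.1 S.2} :=
    fun S => ⟨(applyEvent A input S.1.1 (ev S), bud S), S.2.1.event _, hbiv S⟩
  let seq : ℕ → {S : Config A × ℕ // Occurs A input S.1 ∧ Biv A input p₀ B S.1 S.2} :=
    fun k => nxt^[k] ⟨(initConfig A input, 0), ⟨[], rfl⟩, h0⟩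
  have hseq : ∀ k, seq (k + 1) = nxt (seq k) := fun k => Function.iterate_succ_apply' _ _ _
  let e : ℕ → Event N := fun k => ev (seq k)
  let b : ℕ → ℕ := fun k => (seq k).1.2
  have hb : ∀ k, BTrans p₀ B (b k) (e k) (b (k + 1)) := by
    intro k
    have : b (k + 1) = bud (seq k) := by simp only [b, hseq]; rfl
    rw [this]; exact htr _
  have hrun : ∀ k, run A input (initConfig A input) (initSeg e k) = (seq k).1.1 := by
    intro k
    induction k with
    | zero => rfl
    | succ k ih =>
      have : initSeg e (k + 1) = initSeg e k ++ [e k] := by simp [initSeg, List.range_succ]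
      rw [this, run_snoc, ih, hseq]
  -- No process can take infinitely many steps and crash finitely often.
  have key : ∀ i, (∀ m, ∃ k, m ≤ k ∧ e k = Event.step i) →
      ¬ ∃ m, ∀ k, m ≤ k → e k ≠ Event.crash i := by
    intro i h1 h2
    obtain ⟨k, v, hk⟩ := hW input (initConfig A input) e i (Or.inl rfl) h1 h2
    rw [hrun] at hk
    exact (seq k).2.2.undecided hA (seq k).2.1 hk
  by_cases hp : ∀ m, ∃ k, m ≤ k ∧ e k = Event.step p₀
  · refine key p₀ hp ⟨0, fun k _ hk => ?_⟩
    have h2 := hb k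
    rw [hk] at h2
    generalize b (k + 1) = c at h2
    generalize b k = d at h2
    cases h2 with
    | crash _ h => exact h rfl
  · push Not at hp
    obtain ⟨m, hm⟩ := hp
    -- Beyond `m` the budget is nonincreasing, so it is constant from some point `M` on.
    obtain ⟨M, hM, hmin⟩ : ∃ M, m ≤ M ∧ ∀ k, m ≤ k → b M ≤ b k := by
      have hne : (b '' {k | m ≤ k}).Nonempty := ⟨_, m, le_refl m, rfl⟩
      obtain ⟨M, hM, hMe⟩ := WellFounded.min_mem wellFounded_lt _ hne
      refine ⟨M, hM, fun k hk => ?_⟩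
      rw [hMe]
      exact not_lt.1 (WellFounded.not_lt_min wellFounded_lt (b '' {k | m ≤ k}) ⟨k, hk, rfl⟩)
    have hle : ∀ k, M ≤ k → b k ≤ b M ∧ ∀ i, e k ≠ Event.crash i := by
      intro k hk
      have h1 : b k ≤ b M := by
        induction k, hk using Nat.le_induction with
        | base => exact le_rfl
        | succ k hk ih =>
          have h2 := hb k
          have h3 := hm k (hM.trans hk)
          generalize e k = f at h2 h3
          generalize b (k + 1) = c at h2
          generalize hbk : b k = d at h2
          cases h2 with
          | main => exact absurd rfl h3
          | step _ h => omega
          | crash _ h => omega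
      refine ⟨h1, fun i hi => ?_⟩
      have h2 := hb k
      have h3 := hmin (k + 1) (by omega)
      rw [hi] at h2
      generalize b (k + 1) = c at h2 h3
      generalize hbk : b k = d at h2
      cases h2 with
      | crash _ h => omega
    have hfin : ∀ i, ∃ m', ∀ k, m' ≤ k → e k ≠ Event.step i := by
      intro i
      by_contra hi
      push Not at hi
      exact key i hi ⟨M, fun k hk => (hle k hk).2 i⟩
    choose f hf using hfin
    let K := M + Finset.univ.sup f
    rcases hK : e K with i | i
    · exact hf i K ((Finset.le_sup (Finset.mem_univ i)).trans (Nat.le_add_left _ _)) hK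
    · exact (hle K (Nat.le_add_right _ _)).2 i hK

end Budget

/-! ### The combinatorial condition on object types -/

/-- Two operations `a`, `b` that cannot be the deciding steps of opposite teams on an object with
value `u`: either they lead to the same value in both orders, or one of them behaves, in response
and resulting value, as if the other had not been applied before. -/
def Absorb (T : DetType) (u : T.Value) (a b : T.Op) : Prop :=
  (T.δ (T.δ u a).2 b).2 = (T.δ (T.δ u b).2 a).2 ∨
  T.δ (T.δ u a).2 b = T.δ u b ∨ T.δ (T.δ u b).2 a = T.δ u a

/-- The difference between `u` and `w` is hidden at level `k`: for `k = 0` the values are equal, and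
for `k + 1` every operation either gives the same response and resulting value on both, or leads to
a pair of values hidden at level `k`.  A process that accesses such an object learns the difference
at most `k` times before the values become equal. -/
def Hid (T : DetType) : ℕ → T.Value → T.Value → Prop
  | 0, u, w => u = w
  | k + 1, u, w => ∀ a, T.δ u a = T.δ w a ∨ Hid T k (T.δ u a).2 (T.δ w a).2

/-- The schedule in which `i` goes first, followed by all other processes. -/
def firstSched {N : ℕ} (i : Fin N) : List (Fin N) := i :: (List.finRange N).erase i

/-- If no two operations of opposite teams absorb each other, then letting all `N` processes apply
their operations once hides, at level `K`, which team went first. -/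
def Hides (T : DetType) (N K : ℕ) : Prop :=
  ∀ (u : T.Value) (o : Fin N → T.Op) (t : Fin N → Bool),
    (∀ r q, t r ≠ t q → ¬ Absorb T u (o r) (o q)) →
    ∀ i j, t i ≠ t j →
      Hid T K (applyOps T o u (firstSched i)) (applyOps T o u (firstSched j))

lemma hides_register (V : Type) (N K : ℕ) : Hides (RegisterType V) N K := by
  intro u o t h i j hij
  refine absurd ?_ (h i j hij)
  rcases ha : o i with _ | v <;> rcases hb : o j with _ | w <;> simp [Absorb, RegisterType]

/-- The value of `𝒯_{n,n'}` after `c + 1` update operations the first of which is `op_x`. -/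
def valAt (n : ℕ) (x : Bool) (c : ℕ) : TVal n :=
  if h : c < n - 1 then .mid x ⟨c, h⟩ else .bot

section TTypeFacts

variable {n n' : ℕ} {hn : 2 ≤ n}

lemma δ_valAt {a : TOp} (ha : a ≠ .opR) (x : Bool) (c : ℕ) :
    ((TType n n' hn).δ (valAt n x c) a).2 = valAt n x (c + 1) := by
  by_cases h : c < n - 1
  · by_cases h' : c + 1 < n - 1 <;> cases a <;>
      first
      | exact absurd rfl ha
      | simp only [valAt, TType, h, h', dite_true, dite_false]
  · have h' : ¬ c + 1 < n - 1 := by omega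
    simp only [valAt, TType, h, h', dite_false]

lemma absorb_TType {u : TVal n} {a b : TOp} (h : ¬ Absorb (TType n n' hn) u a b) :
    u = .s ∧ a ≠ .opR ∧ b ≠ .opR ∧ a ≠ b := by
  rcases u with _ | _ | ⟨x, ⟨i, hi⟩⟩
  · cases a <;> cases b <;> simp_all [Absorb, TType]
  · exact absurd (by cases a <;> cases b <;> simp [Absorb, TType]) h
  · exfalso
    apply h
    by_cases h1 : i + 1 < n - 1 <;> by_cases h2 : i + 1 ≤ n' <;> by_cases h3 : i + 1 + 1 ≤ n' <;>
      first
      | omega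
      | (cases a <;> cases b <;> simp [Absorb, TType, h1, h2, h3])

lemma hid_self (T : DetType) (k : ℕ) (u : T.Value) : Hid T k u u := by
  cases k with
  | zero => rfl
  | succ k => exact fun a => Or.inl rfl

/-- After more than `n'` updates, a reading operation destroys the value, and updates drive it
to `s_⊥`. -/
lemma hid_valAt (k : ℕ) (x y : Bool) (c : ℕ) (hc : n' ≤ c) (hk : n - 1 ≤ k + c) :
    Hid (TType n n' hn) k (valAt n x c) (valAt n y c) := by
  induction k generalizing c with
  | zero =>
    have : ¬ c < n - 1 := by omega
    simp only [Hid, valAt, this, dite_false]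
    rfl
  | succ k ih =>
    intro a
    by_cases ha : a = .opR
    · left
      subst ha
      by_cases h : c < n - 1
      · have : ¬ c + 1 ≤ n' := by omega
        simp [valAt, h, TType, this]
      · simp [valAt, h]
    · right
      rw [δ_valAt ha, δ_valAt ha]
      exact ih (c + 1) (by omega) (by omega)

lemma applyOps_valAt {N : ℕ} {o : Fin N → TOp} (ho : ∀ r, o r ≠ .opR) (x : Bool)
    (l : List (Fin N)) (c : ℕ) :
    applyOps (TType n n' hn) o (valAt n x c) l = valAt n x (c + l.length) := by
  induction l generalizing c with
  | nil => rfl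
  | cons i l ih =>
    simp only [applyOps, List.length_cons]
    rw [δ_valAt (ho i)]
    rw [ih]; congr 1; omega

lemma hides_TType : Hides (TType n n' hn) (n' + 1) n := by
  intro u o t h i j hij
  have hu : u = TVal.s := (absorb_TType (h i j hij)).1
  subst hu
  have ho : ∀ r, o r ≠ TOp.opR := by
    intro r
    by_cases hr : t r = t i
    · exact (absorb_TType (h r j (by rw [hr]; exact hij))).2.1
    · exact (absorb_TType (h r i hr)).2.1
  have main : ∀ r : Fin (n' + 1), ∃ x,
      applyOps (TType n n' hn) o TVal.s (firstSched r) = valAt n x n' := by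
    intro r
    have hfirst : ∃ x, ((TType n n' hn).δ TVal.s (o r)).2 = valAt n x 0 := by
      have h0 : 0 < n - 1 := by omega
      rcases hr : o r with _ | _ | _
      · exact ⟨false, by simp [TType, valAt, h0]⟩
      · exact ⟨true, by simp [TType, valAt, h0]⟩
      · exact absurd hr (ho r)
    obtain ⟨x, hx⟩ := hfirst
    refine ⟨x, ?_⟩
    simp only [firstSched, applyOps]
    rw [hx, applyOps_valAt ho]
    simp only [List.length_erase_of_mem (List.mem_finRange r), List.length_finRange,
      Nat.add_sub_cancel, Nat.zero_add]
    rfl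
  obtain ⟨x, hx⟩ := main i
  obtain ⟨y, hy⟩ := main j
  rw [hx, hy]
  exact hid_valAt n x y n' le_rfl (by omega)

end TTypeFacts

/-! ### Impossibility from the combinatorial condition -/

section Core

variable {N : ℕ} {A : Algorithm N} {input : Fin N → Bool} {p₀ : Fin N} {B : ℕ}

lemma pending_after {C : Config A} {r q : Fin N} (hrq : q ≠ r)
    {x : Option ((o : A.ObjIdx) × (A.objType o).Op)} (h : A.pending q (C.pstate q) = x) :
    A.pending q ((applyEvent A input C (.step r)).pstate q) = x := by
  rw [step_pstate_ne hrq]; exact h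

/-- Two configurations of opposite valence that differ, apart from other processes' states, only
in the value of `O`, where the difference is hidden at a level within the crash budget: `q` runs
alone and is crashed after each access to `O` that reveals the difference, until it decides or the
values of `O` become equal. -/
lemma hid_contra (hW : RecWaitFree A) {q : Fin N} (hq : q ≠ p₀) (O : A.ObjIdx) {v w : Bool}
    (hvw : v ≠ w) (k : ℕ) : ∀ (D₁ D₂ : Config A) (b₁ b₂ : ℕ), k ≤ b₁ → k ≤ b₂ →
    Uni A input p₀ B D₁ b₁ v → Uni A input p₀ B D₂ b₂ w → Occurs A input D₁ →
    D₁.pstate q = D₂.pstate q → (∀ o, o ≠ O → D₁.oval o = D₂.oval o) →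
    Hid (A.objType O) k (D₁.oval O) (D₂.oval O) → False := by
  induction k with
  | zero =>
    intro D₁ D₂ b₁ b₂ _ _ u₁ u₂ hr hp ho hh
    refine u₁.indist hW hvw u₂ hr q hp ?_
    funext o
    by_cases h : o = O
    · subst h; exact hh
    · exact ho o h
  | succ k ih =>
    intro D₁ D₂ b₁ b₂ hb₁ hb₂ u₁ u₂ hr hp ho hh
    obtain ⟨m, x, hx⟩ := hr.solo hW q
    induction m generalizing D₁ D₂ with
    | zero =>
      have e₁ := u₁.decided hx
      have e₂ := u₂.decided (i := q) (w := x) (by rw [← hp]; exact hx)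
      exact hvw (e₁.symm.trans e₂)
    | succ m ihm =>
      have s₁ := u₁.event (.step b₁ hq)
      have s₂ := u₂.event (.step b₂ hq)
      have hr' := hr.event (.step q)
      rcases hpend : A.pending q (D₁.pstate q) with _ | ⟨o, a⟩
      · refine ihm D₁ D₂ u₁ u₂ hr hp ho hh ?_
        rw [List.replicate_succ] at hx
        change A.output q ((run A input (applyEvent A input D₁ (.step q)) _).pstate q) = _ at hx
        rwa [step_none hpend] at hx
      · have hpend₂ : A.pending q (D₂.pstate q) = some ⟨o, a⟩ := by rw [← hp]; exact hpend
        by_cases hoO : o = O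
        · subst hoO
          rcases hh a with heq | hk
          · refine s₁.indist hW hvw s₂ hr' q ?_ ?_
            · rw [step_pstate_self hpend, step_pstate_self hpend₂, heq, hp]
            · funext o'
              by_cases h : o' = o
              · subst h; rw [step_oval_self hpend, step_oval_self hpend₂, heq]
              · rw [step_oval_ne hpend h, step_oval_ne hpend₂ h, ho o' h]
          · obtain ⟨c₁, rfl⟩ : ∃ c, b₁ = c + 1 := ⟨b₁ - 1, by omega⟩
            obtain ⟨c₂, rfl⟩ : ∃ c, b₂ = c + 1 := ⟨b₂ - 1, by omega⟩
            refine ih _ _ c₁ c₂ (by omega) (by omega) (s₁.event (.crash c₁ hq))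
              (s₂.event (.crash c₂ hq)) (hr'.event _) ?_ ?_ ?_
            · rw [crash_pstate_self, crash_pstate_self]
            · intro o' h
              rw [crash_oval, crash_oval, step_oval_ne hpend h, step_oval_ne hpend₂ h, ho o' h]
            · rw [crash_oval, crash_oval, step_oval_self hpend, step_oval_self hpend₂]
              exact hk
        · refine ihm _ _ s₁ s₂ hr' ?_ ?_ ?_ hx
          · rw [step_pstate_self hpend, step_pstate_self hpend₂, hp, ho o hoO]
          · intro o' h
            by_cases h' : o' = o
            · subst h'; rw [step_oval_self hpend, step_oval_self hpend₂, ho o' h]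
            · rw [step_oval_ne hpend h', step_oval_ne hpend₂ h', ho o' h]
          · rw [step_oval_ne hpend (Ne.symm hoO), step_oval_ne hpend₂ (Ne.symm hoO)]
            exact hh

/-- One step each of distinct processes poised at the same object. -/
lemma run_poised {O : A.ObjIdx} {ops : Fin N → (A.objType O).Op} (l : List (Fin N))
    (hl : l.Nodup) (C : Config A)
    (hC : ∀ i ∈ l, A.pending i (C.pstate i) = some ⟨O, ops i⟩) :
    (run A input C (l.map .step)).oval O = applyOps (A.objType O) ops (C.oval O) l ∧
    ∀ o, o ≠ O → (run A input C (l.map .step)).oval o = C.oval o := by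
  induction l generalizing C with
  | nil => exact ⟨rfl, fun _ _ => rfl⟩
  | cons i l ih =>
    have hi := hC i (by simp)
    rw [List.nodup_cons] at hl
    obtain ⟨h1, h2⟩ := ih hl.2 (applyEvent A input C (.step i)) (fun j hj =>
      pending_after (ne_of_mem_of_not_mem hj hl.1) (hC j (by simp [hj])))
    simp only [List.map_cons, run, applyOps]
    refine ⟨by rw [h1, step_oval_self hi], fun o ho => by rw [h2 o ho, step_oval_ne hi ho]⟩

lemma firstSched_nodup (i : Fin N) : (firstSched i).Nodup := by
  rw [firstSched, List.nodup_cons]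
  exact ⟨(List.nodup_finRange N).not_mem_erase, (List.nodup_finRange N).erase i⟩

/-- Steps of opposite teams at a critical configuration never commute on the memory: some process
would not notice the order, namely `p₀` if it takes neither step, and otherwise the other process
after a crash, which is paid for by the step of `p₀`. -/
lemma no_commute (hW : RecWaitFree A) (hB : 1 ≤ B) {C : Config A} {b : ℕ}
    (hC : Occurs A input C) {t : Fin N → Bool}
    (ht : ∀ i b', BTrans p₀ B b (.step i) b' →
      Uni A input p₀ B (applyEvent A input C (.step i)) b' (t i))
    {r q : Fin N} (hrq : t r ≠ t q) :
    (applyEvent A input (applyEvent A input C (.step r)) (.step q)).oval ≠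
      (applyEvent A input (applyEvent A input C (.step q)) (.step r)).oval := by
  intro ho
  have hne : r ≠ q := fun h => hrq (by rw [h])
  obtain ⟨b₁, -, tr⟩ := exists_stepTrans p₀ B b r
  obtain ⟨b₂, -, trq⟩ := exists_stepTrans p₀ B b₁ q
  obtain ⟨c₁, -, tq⟩ := exists_stepTrans p₀ B b q
  obtain ⟨c₂, -, tqr⟩ := exists_stepTrans p₀ B c₁ r
  have u₁ := (ht r _ tr).event trq
  have u₂ := (ht q _ tq).event tqr
  have hr := (hC.event (.step r)).event (.step q)
  obtain ⟨d, rfl⟩ : ∃ d, B = d + 1 := ⟨B - 1, by omega⟩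
  by_cases h1 : p₀ = r
  · subst h1
    have hq := hne.symm
    have u₁ := ((ht p₀ _ (.main b)).event (.step _ hq)).event (.crash (b + d) hq)
    have u₂ := ((ht q _ (.step b hq)).event (.main b)).event (.crash (b + d) hq)
    exact u₁.indist hW hrq u₂ (hr.event _) q (by rw [crash_pstate_self, crash_pstate_self]) ho
  · by_cases h2 : p₀ = q
    · subst h2
      have u₁ := ((ht r _ (.step b hne)).event (.main b)).event (.crash (b + d) hne)
      have u₂ := ((ht p₀ _ (.main b)).event (.step _ hne)).event (.crash (b + d) hne)
      exact u₁.indist hW hrq u₂ (hr.event _) r (by rw [crash_pstate_self, crash_pstate_self]) ho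
    · refine u₁.indist hW hrq u₂ hr p₀ ?_ ho
      rw [step_pstate_ne h2, step_pstate_ne h1, step_pstate_ne h1, step_pstate_ne h2]

/-- At a critical configuration, a process `q` of the opposite team notices whether `r` has taken
its step before the step of `q`. -/
lemma no_overwrite (hW : RecWaitFree A) {C : Config A} {b : ℕ}
    (hC : Occurs A input C) {t : Fin N → Bool}
    (ht : ∀ i b', BTrans p₀ B b (.step i) b' →
      Uni A input p₀ B (applyEvent A input C (.step i)) b' (t i))
    {r q : Fin N} (hrq : t r ≠ t q)
    (ho : (applyEvent A input (applyEvent A input C (.step r)) (.step q)).oval =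
      (applyEvent A input C (.step q)).oval)
    (hp : (applyEvent A input (applyEvent A input C (.step r)) (.step q)).pstate q =
      (applyEvent A input C (.step q)).pstate q) : False := by
  obtain ⟨b₁, -, tr⟩ := exists_stepTrans p₀ B b r
  obtain ⟨b₂, -, trq⟩ := exists_stepTrans p₀ B b₁ q
  obtain ⟨c₁, -, tq⟩ := exists_stepTrans p₀ B b q
  exact ((ht r _ tr).event trq).indist hW hrq (ht q _ tq)
    ((hC.event (.step r)).event (.step q)) q hp ho

/-- At a critical configuration, processes of opposite teams are poised at the same object, and
their operations do not absorb each other. -/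
lemma same_object (hW : RecWaitFree A) (hB : 1 ≤ B) {C : Config A} {b : ℕ}
    (hC : Occurs A input C) {t : Fin N → Bool}
    (ht : ∀ i b', BTrans p₀ B b (.step i) b' →
      Uni A input p₀ B (applyEvent A input C (.step i)) b' (t i))
    {r q : Fin N} (hrq : t r ≠ t q) :
    ∃ (O : A.ObjIdx) (x y : (A.objType O).Op),
      A.pending r (C.pstate r) = some ⟨O, x⟩ ∧ A.pending q (C.pstate q) = some ⟨O, y⟩ ∧
      ¬ Absorb (A.objType O) (C.oval O) x y := by
  have hne : r ≠ q := fun h => hrq (by rw [h])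
  rcases hr : A.pending r (C.pstate r) with _ | ⟨O, x⟩
  · exact (no_overwrite hW hC ht hrq (by rw [step_none hr]) (by rw [step_none hr])).elim
  rcases hq : A.pending q (C.pstate q) with _ | ⟨O', y⟩
  · exact (no_overwrite hW hC ht hrq.symm (by rw [step_none hq]) (by rw [step_none hq])).elim
  have hrq' := pending_after (input := input) hne.symm hq
  have hqr' := pending_after (input := input) hne hr
  by_cases hO : O = O'
  · subst hO
    refine ⟨O, x, y, rfl, rfl, ?_⟩
    rintro (h | h | h)
    · refine no_commute hW hB hC ht hrq ?_
      funext o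
      by_cases ho : o = O
      · subst ho
        rw [step_oval_self hrq', step_oval_self hr, step_oval_self hqr', step_oval_self hq, h]
      · rw [step_oval_ne hrq' ho, step_oval_ne hr ho, step_oval_ne hqr' ho, step_oval_ne hq ho]
    · refine no_overwrite hW hC ht hrq ?_ ?_
      · funext o
        by_cases ho : o = O
        · subst ho
          rw [step_oval_self hrq', step_oval_self hr, step_oval_self hq, h]
        · rw [step_oval_ne hrq' ho, step_oval_ne hr ho, step_oval_ne hq ho]
      · rw [step_pstate_self hrq', step_oval_self hr, step_pstate_self hq,
          step_pstate_ne hne.symm, h]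
    · refine no_overwrite hW hC ht hrq.symm ?_ ?_
      · funext o
        by_cases ho : o = O
        · subst ho
          rw [step_oval_self hqr', step_oval_self hq, step_oval_self hr, h]
        · rw [step_oval_ne hqr' ho, step_oval_ne hq ho, step_oval_ne hr ho]
      · rw [step_pstate_self hqr', step_oval_self hq, step_pstate_self hr,
          step_pstate_ne hne, h]
  · refine (no_commute hW hB hC ht hrq ?_).elim
    funext o
    by_cases ho : o = O
    · subst ho
      rw [step_oval_ne hrq' hO, step_oval_self hr, step_oval_self hqr', step_oval_ne hq hO]
    · by_cases ho' : o = O'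
      · subst ho'
        rw [step_oval_self hrq', step_oval_ne hr ho, step_oval_ne hqr' ho, step_oval_self hq]
      · rw [step_oval_ne hrq' ho', step_oval_ne hr ho, step_oval_ne hqr' ho, step_oval_ne hq ho']

/-- No recoverable wait-free consensus algorithm for at least two processes uses only objects
whose types satisfy `Hides`. -/
lemma impossible {K : ℕ} {p₀ p₁ : Fin N} (hp : p₁ ≠ p₀)
    (hT : ∀ o, Hides (A.objType o) N K) : ¬ SolvesRecConsensus A := by
  rintro ⟨hA, hV, hW⟩
  obtain ⟨input, h0⟩ := exists_initial_biv (p₀ := p₀) (B := K + 1) hV hW hp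
  obtain ⟨C, b, hC, hbiv, hcrit⟩ := exists_critical hA hW h0
  have hteam : ∀ i, ∃ v, ∀ b', BTrans p₀ (K + 1) b (.step i) b' →
      Uni A input p₀ (K + 1) (applyEvent A input C (.step i)) b' v := by
    intro i
    obtain ⟨b', -, tr⟩ := exists_stepTrans p₀ (K + 1) b i
    obtain ⟨v, hv⟩ := exists_uni_of_not_biv (hcrit _ _ tr)
    refine ⟨v, fun b'' tr' => ?_⟩
    have : b'' = b' := by
      cases tr <;> cases tr' <;> first | rfl | contradiction
    exact this ▸ hv
  choose t ht using hteam
  obtain ⟨q, hq⟩ : ∃ q, t q ≠ t p₀ := by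
    obtain ⟨σ, b', hσ, i, hi⟩ := hbiv (!t p₀)
    cases hσ with
    | nil => exact absurd hi (hbiv.undecided hA hC)
    | cons he hσ =>
      rename_i e b₁ σ
      obtain ⟨v, hv⟩ := exists_uni_of_not_biv (hcrit _ _ he)
      have hvt : (!t p₀) = v := (hv.sched hσ).decided hi
      have hvt' : t p₀ ≠ v := by rw [← hvt]; simp
      cases he with
      | main => exact absurd ((ht p₀ _ (.main b)).sched hσ |>.decided hi) (by simp)
      | step _ h =>
        rename_i q
        refine ⟨q, fun hqt => ?_⟩
        exact absurd ((ht q _ (.step b h)).sched hσ |>.decided hi) (by simp [hqt])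
      | crash _ h =>
        -- A crash commutes with a step of `p₀`, so it cannot have the opposite valence.
        rename_i q
        have u₁ := (ht p₀ _ (.main _)).event
          (by rw [show b₁ + 1 + (K + 1) = b₁ + (K + 1) + 1 by omega]
              exact BTrans.crash (B := K + 1) (b₁ + (K + 1)) h)
        have u₂ := hv.event (.main _)
        have hs := step_congr (input := input) (input' := input) (r := p₀)
          (D := applyEvent A input C (.crash q)) (crash_pstate_ne C (Ne.symm h)).symm rfl
        refine (u₁.indist hW hvt' u₂ ((hC.event _).event _) p₀ ?_ ?_).elim
        · rw [crash_pstate_ne _ (Ne.symm h)]; exact hs.1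
        · rw [crash_oval]; exact hs.2
  have hqp : q ≠ p₀ := fun h => hq (by rw [h])
  obtain ⟨O, x, y, hx, hy, -⟩ := same_object hW (by omega) hC ht hq
  have hops : ∀ i, ∃ a, A.pending i (C.pstate i) = some ⟨O, a⟩ := by
    intro i
    by_cases hi : t i = t p₀
    · obtain ⟨O', x', y', hx', hy', -⟩ := same_object hW (by omega) hC ht
        (show t i ≠ t q by rw [hi]; exact hq.symm)
      rw [hx] at hy'
      obtain ⟨rfl, -⟩ := Sigma.mk.inj (Option.some.inj hy')
      exact ⟨x', hx'⟩
    · obtain ⟨O', x', y', hx', hy', -⟩ := same_object hW (by omega) hC ht hi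
      rw [hy] at hy'
      obtain ⟨rfl, -⟩ := Sigma.mk.inj (Option.some.inj hy')
      exact ⟨x', hx'⟩
  choose ops hops using hops
  have hab : ∀ r s, t r ≠ t s → ¬ Absorb (A.objType O) (C.oval O) (ops r) (ops s) := by
    intro r s hrs
    obtain ⟨O', x', y', hx', hy', hn⟩ := same_object hW (by omega) hC ht hrs
    rw [hops] at hx' hy'
    obtain ⟨rfl, h1⟩ := Sigma.mk.inj (Option.some.inj hx')
    obtain ⟨-, h2⟩ := Sigma.mk.inj (Option.some.inj hy')
    rw [eq_of_heq h1, eq_of_heq h2]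
    exact hn
  have hhid := hT O (C.oval O) ops t hab p₀ q hq.symm
  -- All processes take their step, `p₀` or `q` going first, and then `q` crashes.
  have sched : ∀ i, ∃ b', K + 1 ≤ b' ∧
      Uni A input p₀ (K + 1) (run A input C ((firstSched i).map .step)) b' (t i) := by
    intro i
    by_cases hi : i = p₀
    · subst hi
      obtain ⟨b', hb', hs⟩ := exists_stepsSched i (K + 1) ((List.finRange N).erase i)
        (b + (K + 1))
      exact ⟨b', by omega, (ht i _ (.main b)).sched hs⟩
    · have hmem : p₀ ∈ (List.finRange N).erase i :=
        (List.mem_erase_of_ne (Ne.symm hi)).2 (List.mem_finRange _)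
      obtain ⟨l₁, l₂, hl⟩ := List.append_of_mem hmem
      obtain ⟨b₁, _, hs₁⟩ := exists_stepsSched p₀ (K + 1) l₁ b
      obtain ⟨b₂, hb₂, hs₂⟩ := exists_stepsSched p₀ (K + 1) l₂ (b₁ + (K + 1))
      refine ⟨b₂, by omega, ?_⟩
      have := (((ht i _ (.step b hi)).sched hs₁).event (.main _)).sched hs₂
      rw [firstSched, hl, List.map_cons, List.map_append, List.map_cons]
      change Uni A input p₀ (K + 1) (run A input (applyEvent A input C (.step i)) _) b₂ (t i)
      rw [run_append]
      exact this
  obtain ⟨b₁, hb₁, u₁⟩ := sched p₀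
  obtain ⟨b₂, hb₂, u₂⟩ := sched q
  obtain ⟨c₁, rfl⟩ : ∃ c, b₁ = c + 1 := ⟨b₁ - 1, by omega⟩
  obtain ⟨c₂, rfl⟩ : ∃ c, b₂ = c + 1 := ⟨b₂ - 1, by omega⟩
  obtain ⟨e₁, f₁⟩ := run_poised (input := input) _ (firstSched_nodup p₀) C (fun i _ => hops i)
  obtain ⟨e₂, f₂⟩ := run_poised (input := input) _ (firstSched_nodup q) C (fun i _ => hops i)
  refine hid_contra hW hqp O hq.symm K _ _ c₁ c₂ (by omega) (by omega)
    (u₁.event (.crash c₁ hqp)) (u₂.event (.crash c₂ hqp)) ((hC.run _).event _) ?_ ?_ ?_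
  · rw [crash_pstate_self, crash_pstate_self]
  · intro o ho
    rw [crash_oval, crash_oval, f₁ o ho, f₂ o ho]
  · rw [crash_oval, crash_oval, e₁, e₂]
    exact hhid

end Core

/-! ### The algorithm for `n'` processes -/

section Upper

/-- Local states of the algorithm: about to read, about to apply `op_x` for the input `x`, and
decided. -/
inductive St : Type where
  | start : Bool → St
  | ready : Bool → St
  | done : Bool → St

/-- The update operation for the input `x`. -/
def opOf (x : Bool) : TOp := if x then .op1 else .op0

/-- The local transition on a response: reading `s` leads to the update, reading `s_{x,i}` decides
`x`, and the update decides the returned bit.  Responses that never occur lead to an arbitrary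
decision, which makes every process decide after two steps. -/
def nextSt {n : ℕ} : St → TResp n → St
  | .start x, .val .s => .ready x
  | .start _, .val (.mid y _) => .done y
  | .start x, _ => .done x
  | .ready _, .bit y => .done y
  | .ready x, _ => .done x
  | .done x, _ => .done x

/-- The operation to be applied next. -/
def pendSt : St → Option TOp
  | .start _ => some .opR
  | .ready x => some (opOf x)
  | .done _ => none

/-- The decided value, if any. -/
def outSt : St → Option Bool
  | .done x => some x
  | _ => none

/-- Whether an update is about to be applied. -/
def isReady : St → Bool
  | .ready _ => true
  | _ => false

/-- An upper bound on the number of steps to a decision. -/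
def rank : St → ℕ
  | .start _ => 2
  | .ready _ => 1
  | .done _ => 0

/-- Consensus from a single object of type `𝒯_{n,n'}` with initial value `s`: read the object, if
it is still `s` apply the update for the own input, and decide the bit learned. -/
def algo (n n' : ℕ) (hn : 2 ≤ n) : Algorithm n' where
  ObjIdx := Unit
  objType := fun _ => TType n n' hn
  objInit := fun _ => TVal.s
  PState := fun _ => St
  init := fun _ x => .start x
  pending := fun _ st => (pendSt st).map fun a => ⟨(), a⟩
  next := fun _ st _ resp => nextSt st resp
  output := fun _ st => outSt st
  output_noop := by
    intro i st h
    cases st with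
    | done x => rfl
    | _ => exact absurd rfl h

variable {n n' : ℕ} {hn : 2 ≤ n} {input : Fin n' → Bool}

/-- The number of processes about to apply an update. -/
def readyCount (C : Config (algo n n' hn)) : ℕ :=
  (Finset.univ.filter fun i : Fin n' => isReady (C.pstate i) = true).card

/-- No update has been applied. -/
def InvS (input : Fin n' → Bool) (C : Config (algo n n' hn)) : Prop :=
  C.oval () = TVal.s ∧ ∀ i, C.pstate i = St.start (input i) ∨ C.pstate i = St.ready (input i)

/-- The first update was `op_x`; the number of updates applied plus the number of those still
pending is at most `n'`. -/
def InvM (input : Fin n' → Bool) (x : Bool) (C : Config (algo n n' hn)) : Prop :=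
  (∃ j, input j = x) ∧
  (∀ i, C.pstate i = St.start (input i) ∨ C.pstate i = St.ready (input i) ∨
    C.pstate i = St.done x) ∧
  ∃ k : Fin (n - 1), C.oval () = TVal.mid x k ∧ k.val + 1 + readyCount C ≤ n'

lemma readyCount_le {C D : Config (algo n n' hn)}
    (h : ∀ i, isReady (D.pstate i) = true → isReady (C.pstate i) = true) :
    readyCount D ≤ readyCount C :=
  Finset.card_le_card fun i hi => by
    simp only [Finset.mem_filter, Finset.mem_univ, true_and] at hi ⊢
    exact h i hi

lemma readyCount_lt {C D : Config (algo n n' hn)} {i₀ : Fin n'}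
    (h : ∀ i, isReady (D.pstate i) = true → isReady (C.pstate i) = true)
    (hC : isReady (C.pstate i₀) = true) (hD : ¬ isReady (D.pstate i₀) = true) :
    readyCount D < readyCount C :=
  Finset.card_lt_card (Finset.ssubset_iff_of_subset (fun i hi => by
    simp only [Finset.mem_filter, Finset.mem_univ, true_and] at hi ⊢
    exact h i hi) |>.2 ⟨i₀, by simpa using hC, by simpa using hD⟩)

lemma readyCount_le_card (C : Config (algo n n' hn)) : readyCount C ≤ n' := by
  refine (Finset.card_filter_le _ _).trans ?_
  simp

lemma algo_step_start {C : Config (algo n n' hn)} {i : Fin n'} {x : Bool}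
    (h : C.pstate i = St.start x) :
    (applyEvent _ input C (.step i)).pstate i =
      nextSt (.start x) ((TType n n' hn).δ (C.oval ()) TOp.opR).1 ∧
    (applyEvent _ input C (.step i)).oval () = ((TType n n' hn).δ (C.oval ()) TOp.opR).2 := by
  have hp : (algo n n' hn).pending i (C.pstate i) = some ⟨(), TOp.opR⟩ := by rw [h]; rfl
  refine ⟨?_, step_oval_self hp⟩
  rw [step_pstate_self hp, h]; rfl

lemma algo_step_ready {C : Config (algo n n' hn)} {i : Fin n'} {x : Bool}
    (h : C.pstate i = St.ready x) :
    (applyEvent _ input C (.step i)).pstate i =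
      nextSt (.ready x) ((TType n n' hn).δ (C.oval ()) (opOf x)).1 ∧
    (applyEvent _ input C (.step i)).oval () = ((TType n n' hn).δ (C.oval ()) (opOf x)).2 := by
  have hp : (algo n n' hn).pending i (C.pstate i) = some ⟨(), opOf x⟩ := by rw [h]; rfl
  refine ⟨?_, step_oval_self hp⟩
  rw [step_pstate_self hp, h]; rfl

lemma algo_step_done {C : Config (algo n n' hn)} {i : Fin n'} {x : Bool}
    (h : C.pstate i = St.done x) : applyEvent _ input C (.step i) = C :=
  step_none (by rw [h]; rfl)

lemma δ_s_opOf (x : Bool) : (TType n n' hn).δ TVal.s (opOf x) =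
    (TResp.bit x, TVal.mid x ⟨0, by omega⟩) := by
  cases x <;> rfl

lemma δ_mid_opOf (x y : Bool) (k : Fin (n - 1)) (h : k.val + 1 < n - 1) :
    (TType n n' hn).δ (TVal.mid y k) (opOf x) = (TResp.bit y, TVal.mid y ⟨k.val + 1, h⟩) := by
  cases x <;> simp [TType, opOf, h]

lemma δ_mid_opR (y : Bool) (k : Fin (n - 1)) (h : k.val + 1 ≤ n') :
    (TType n n' hn).δ (TVal.mid y k) TOp.opR = (TResp.val (.mid y k), TVal.mid y k) := by
  simp only [TType, h, if_true]

lemma InvS.event {C : Config (algo n n' hn)} (h : InvS input C) (e : Event n') :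
    InvS input (applyEvent _ input C e) ∨ ∃ x, InvM input x (applyEvent _ input C e) := by
  obtain ⟨hs, hst⟩ := h
  cases e with
  | crash i =>
    left
    refine ⟨hs, fun j => ?_⟩
    by_cases hj : j = i
    · subst hj; left; exact crash_pstate_self _ _
    · rw [crash_pstate_ne _ hj]; exact hst j
  | step i =>
    rcases hst i with hi | hi
    · left
      obtain ⟨h1, h2⟩ := algo_step_start (input := input) hi
      rw [hs] at h1 h2
      refine ⟨h2, fun j => ?_⟩
      by_cases hj : j = i
      · subst hj; right; exact h1
      · rw [step_pstate_ne hj]; exact hst j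
    · right
      obtain ⟨h1, h2⟩ := algo_step_ready (input := input) hi
      rw [hs, δ_s_opOf] at h1 h2
      refine ⟨input i, ⟨i, rfl⟩, fun j => ?_, ⟨0, by omega⟩, h2, ?_⟩
      · by_cases hj : j = i
        · subst hj; right; right; exact h1
        · rw [step_pstate_ne hj]; have := hst j; tauto
      · have hlt : readyCount (applyEvent _ input C (.step i)) < readyCount C := by
          refine readyCount_lt (i₀ := i) (fun j hj => ?_) (by rw [hi]; rfl) (by
            rw [h1]; simp [nextSt, isReady])
          by_cases hji : j = i
          · subst hji; rw [hi]; rfl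
          · rwa [step_pstate_ne hji] at hj
        have := readyCount_le_card C
        simp only
        omega

lemma InvM.event (hlt : n' < n) {x : Bool} {C : Config (algo n n' hn)} (h : InvM input x C)
    (e : Event n') : InvM input x (applyEvent _ input C e) := by
  obtain ⟨hv, hst, k, hk, hc⟩ := h
  cases e with
  | crash i =>
    refine ⟨hv, fun j => ?_, k, hk,
      le_trans (Nat.add_le_add_left (readyCount_le fun j hj => ?_) _) hc⟩
    · by_cases hj : j = i
      · subst hj; left; exact crash_pstate_self _ _
      · rw [crash_pstate_ne _ hj]; exact hst j
    · by_cases hji : j = i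
      · subst hji; rw [crash_pstate_self] at hj; exact absurd hj (by simp [algo, isReady])
      · rwa [crash_pstate_ne _ hji] at hj
  | step i =>
    rcases hst i with hi | hi | hi
    · obtain ⟨h1, h2⟩ := algo_step_start (input := input) hi
      rw [hk, δ_mid_opR _ _ (by omega)] at h1 h2
      refine ⟨hv, fun j => ?_, k, h2,
        le_trans (Nat.add_le_add_left (readyCount_le fun j hj => ?_) _) hc⟩
      · by_cases hj : j = i
        · subst hj; right; right; exact h1
        · rw [step_pstate_ne hj]; exact hst j
      · by_cases hji : j = i
        · subst hji; rw [h1] at hj; exact absurd hj (by simp [nextSt, isReady])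
        · rwa [step_pstate_ne hji] at hj
    · obtain ⟨h1, h2⟩ := algo_step_ready (input := input) hi
      have hi' : isReady (C.pstate i) = true := by rw [hi]; rfl
      have hpos : 0 < readyCount C := Finset.card_pos.2 ⟨i, by simpa using hi'⟩
      have hk1 : k.val + 1 < n - 1 := by omega
      rw [hk, δ_mid_opOf _ _ _ hk1] at h1 h2
      refine ⟨hv, fun j => ?_, ⟨k.val + 1, hk1⟩, h2, ?_⟩
      · by_cases hj : j = i
        · subst hj; right; right; exact h1
        · rw [step_pstate_ne hj]; exact hst j
      · have hlt : readyCount (applyEvent _ input C (.step i)) < readyCount C := by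
          refine readyCount_lt (i₀ := i) (fun j hj => ?_) hi' (by
            rw [h1]; simp [nextSt, isReady])
          by_cases hji : j = i
          · subst hji; exact hi'
          · rwa [step_pstate_ne hji] at hj
        simp only
        omega
    · rw [algo_step_done hi]
      exact ⟨hv, hst, k, hk, hc⟩

lemma InvM.run (hlt : n' < n) {x : Bool} (σ : List (Event n')) {C : Config (algo n n' hn)}
    (h : InvM input x C) : InvM input x (RecoverableConsensus.run _ input C σ) := by
  induction σ generalizing C with
  | nil => exact h
  | cons e σ ih => exact ih (h.event hlt e)

lemma inv_run (hlt : n' < n) (σ : List (Event n')) {C : Config (algo n n' hn)}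
    (h : InvS input C) :
    InvS input (run _ input C σ) ∨ ∃ x, InvM input x (run _ input C σ) := by
  induction σ generalizing C with
  | nil => exact Or.inl h
  | cons e σ ih =>
    rcases h.event e with h | ⟨x, h⟩
    · exact ih h
    · exact Or.inr ⟨x, h.run hlt σ⟩

lemma InvM.output {x v : Bool} {C : Config (algo n n' hn)} (h : InvM input x C) {i : Fin n'}
    (hi : (algo n n' hn).output i (C.pstate i) = some v) : v = x := by
  rcases h.2.1 i with h | h | h <;> rw [h] at hi <;> simp [algo, outSt] at hi
  exact hi.symm

lemma invM_of_output (hlt : n' < n) (σ : List (Event n')) {i : Fin n'} {v : Bool}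
    (hi : (algo n n' hn).output i ((run _ input (initConfig _ input) σ).pstate i) = some v) :
    InvM input v (run (algo n n' hn) input (initConfig _ input) σ) := by
  have h0 : InvS input (initConfig (algo n n' hn) input) := ⟨rfl, fun i => Or.inl rfl⟩
  rcases inv_run hlt σ h0 with h | ⟨x, h⟩
  · rcases h.2 i with h | h <;> rw [h] at hi <;> simp [algo, outSt] at hi
  · rw [h.output hi]; exact h

/-- Steps never increase the rank of a process that does not crash, and its own steps decrease
it. -/
lemma rank_event (C : Config (algo n n' hn)) {i : Fin n'} {e : Event n'} (he : e ≠ .crash i) :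
    rank ((applyEvent _ input C e).pstate i) ≤ rank (C.pstate i) ∧
    (e = .step i → rank ((applyEvent _ input C e).pstate i) ≤ rank (C.pstate i) - 1) := by
  cases e with
  | crash j =>
    have hj : i ≠ j := by rintro rfl; exact he rfl
    rw [crash_pstate_ne _ hj]; simp
  | step j =>
    by_cases hj : i = j
    · subst hj
      have : rank ((applyEvent _ input C (.step i)).pstate i) ≤ rank (C.pstate i) - 1 := by
        rcases hs : C.pstate i with x | x | x
        · rw [(algo_step_start hs).1]
          rcases ((TType n n' hn).δ (C.oval ()) TOp.opR).1 with _ | (_ | _ | _) | _ <;>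
            simp [nextSt, rank]
        · rw [(algo_step_ready hs).1]
          rcases ((TType n n' hn).δ (C.oval ()) (opOf x)).1 with _ | _ | _ <;>
            simp [nextSt, rank]
        · rw [algo_step_done hs, hs]; simp [rank]
      exact ⟨this.trans (Nat.sub_le _ _), fun _ => this⟩
    · rw [step_pstate_ne hj]
      exact ⟨le_rfl, fun h => absurd (Event.step.inj h).symm hj⟩

lemma algo_recWaitFree : RecWaitFree (algo n n' hn) := by
  rintro input C e i - hinf ⟨m, hm⟩
  let S : ℕ → St := fun k => (run (algo n n' hn) input C (initSeg e k)).pstate i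
  have hS : ∀ k, m ≤ k → rank (S (k + 1)) ≤ rank (S k) ∧
      (e k = .step i → rank (S (k + 1)) ≤ rank (S k) - 1) := by
    intro k hk
    have : initSeg e (k + 1) = initSeg e k ++ [e k] := by simp [initSeg, List.range_succ]
    simp only [S, this, run_snoc]
    exact rank_event _ (hm k hk)
  have hmono : ∀ k, m ≤ k → ∀ l, k ≤ l → rank (S l) ≤ rank (S k) := by
    intro k hk l hl
    induction l, hl using Nat.le_induction with
    | base => exact le_rfl
    | succ l hl ih => exact (hS l (hk.trans hl)).1.trans ih
  have hdec : ∀ r k, m ≤ k → rank (S k) ≤ r → ∃ l, rank (S l) = 0 := by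
    intro r
    induction r with
    | zero => intro k _ h; exact ⟨k, Nat.le_zero.1 h⟩
    | succ r ih =>
      intro k hk h
      obtain ⟨l, hl, hel⟩ := hinf k
      have h1 := (hS l (hk.trans hl)).2 hel
      have h2 := hmono k hk l hl
      exact ih (l + 1) (by omega) (by omega)
  obtain ⟨l, hl⟩ := hdec _ m le_rfl le_rfl
  rcases hs : S l with x | x | x
  · rw [hs] at hl; simp [rank] at hl
  · rw [hs] at hl; simp [rank] at hl
  · exact ⟨l, x, congrArg outSt hs⟩

lemma algo_solves (hlt : n' < n) : SolvesRecConsensus (algo n n' hn) := by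
  refine ⟨?_, ?_, algo_recWaitFree⟩
  · have key : ∀ (input : Fin n' → Bool) (τ ρ : List (Event n')) (i j : Fin n') (v w : Bool),
        τ <+: ρ →
        (algo n n' hn).output i ((run _ input (initConfig _ input) τ).pstate i) = some v →
        (algo n n' hn).output j ((run _ input (initConfig _ input) ρ).pstate j) = some w →
        w = v := by
      rintro input τ _ i j v w ⟨κ, rfl⟩ hi hj
      rw [run_append] at hj
      exact ((invM_of_output hlt τ hi).run hlt κ).output hj
    rintro input σ i j v w ⟨τ, hτ, hi⟩ ⟨ρ, hρ, hj⟩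
    rcases List.prefix_or_prefix_of_prefix hτ hρ with h | h
    · exact (key input τ ρ i j v w h hi hj).symm
    · exact key input ρ τ j i w v h hj hi
  · rintro input σ i v ⟨τ, -, hi⟩
    exact (invM_of_output hlt τ hi).1

end Upper

end RecoverableConsensus

open RecoverableConsensus in
/-- For all integers `n > n' ≥ 1`, the type `𝒯_{n,n'}` has recoverable
consensus number exactly `n'`: there is a recoverable wait-free binary consensus algorithm
for `n'` processes using objects of type `𝒯_{n,n'}` together with registers, but no such
algorithm for `n'+1` processes. -/
theorem TType_recoverable_consensus_number
    (n n' : ℕ) (h1 : 1 ≤ n') (h2 : n' < n) (hn : 2 ≤ n) :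
    (∃ A : Algorithm n', UsesTypeAndRegisters A (TType n n' hn) ∧ SolvesRecConsensus A) ∧
    ¬ (∃ A : Algorithm (n' + 1),
        UsesTypeAndRegisters A (TType n n' hn) ∧ SolvesRecConsensus A) := by
  refine ⟨⟨algo n n' hn, fun _ => Or.inl rfl, algo_solves h2⟩, ?_⟩
  rintro ⟨A, hU, hS⟩
  -- Two distinct processes exist because `1 ≤ n'`.
  refine impossible (K := n) (p₀ := ⟨0, by omega⟩) (p₁ := ⟨1, by omega⟩) (by simp) (fun o => ?_) hS
  rcases hU o with h | ⟨V, h⟩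
  · rw [h]; exact hides_TType
  · rw [h]; exact hides_register V _ _
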